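/- arXiv:2411.07909 — 4 statements merged into one kernel-verified Lean document; each statement's English description precedes it below -/
import Mathlib

section
/- Let q₁, q₂ ∈ ℤ with q₁, q₂ ∉ {−1, 0, 1} and q₁ ≠ q₂. Then the Lehmer pair associated with (1+q₁, 1−3q₁) and the Lehmer pair associated with (1+q₂, 1−3q₂) are not equivalent. -/
open Complex

/-- A fixed choice of complex square root of an integer. -/
noncomputable def csqrt (a : ℤ) : ℂ := (a : ℂ) ^ ((1 : ℂ) / 2)

/-- First component of the Lehmer pair associated with `(a, b)`: `(√a - √b)/2`. -/
noncomputable def assocFst (a b : ℤ) : ℂ := (csqrt a - csqrt b) / 2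

/-- Second component of the Lehmer pair associated with `(a, b)`: `(√a + √b)/2`. -/
noncomputable def assocSnd (a b : ℤ) : ℂ := (csqrt a + csqrt b) / 2

/-- `(α, β)` is a Lehmer pair: `α`, `β` are algebraic integers, `(α+β)^2` and `αβ` are
nonzero coprime rational integers, and `α/β` is not a root of unity. -/
def IsLehmerPair (α β : ℂ) : Prop :=
  IsIntegral ℤ α ∧ IsIntegral ℤ β ∧
  (∃ p q : ℤ, ((α + β) ^ 2 = (p : ℂ)) ∧ (α * β = (q : ℂ)) ∧ p ≠ 0 ∧ q ≠ 0 ∧ IsCoprime p q) ∧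
  ¬ ∃ n : ℕ, 0 < n ∧ (α / β) ^ n = 1

/-- The Lehmer numbers `ũ_n(α, β)`. -/
noncomputable def lehmerU (α β : ℂ) (n : ℕ) : ℂ :=
  if Odd n then (α ^ n - β ^ n) / (α - β) else (α ^ n - β ^ n) / (α ^ 2 - β ^ 2)

/-- `z` is an integer divisible by `ℓ`. -/
def IntDvd (ℓ : ℕ) (z : ℂ) : Prop := ∃ m : ℤ, (m : ℂ) = z ∧ (ℓ : ℤ) ∣ m

/-- `ℓ` is a primitive divisor of `ũ_n(α, β)`: `ℓ` is a prime dividing `ũ_n(α, β)` but not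
dividing `(α^2 - β^2)^2 ũ_1(α,β) ⋯ ũ_{n-1}(α,β)`. -/
def IsPrimitiveDivisor (ℓ : ℕ) (n : ℕ) (α β : ℂ) : Prop :=
  ℓ.Prime ∧ IntDvd ℓ (lehmerU α β n) ∧
  ¬ IntDvd ℓ ((α ^ 2 - β ^ 2) ^ 2 * ∏ i ∈ Finset.Ico 1 n, lehmerU α β i)

/-- `(α, β)` is an `n`-defective Lehmer pair: a Lehmer pair such that `ũ_n(α, β)` has no
primitive divisor. -/
def IsDefective (n : ℕ) (α β : ℂ) : Prop :=
  IsLehmerPair α β ∧ ∀ ℓ : ℕ, ¬ IsPrimitiveDivisor ℓ n α β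

/-- Two Lehmer pairs `(α₁, β₁)` and `(α₂, β₂)` are equivalent if
`α₁/α₂ = β₁/β₂ ∈ {1, -1, i, -i}`. -/
def LehmerEquiv (α₁ β₁ α₂ β₂ : ℂ) : Prop :=
  ∃ c : ℂ, (c = 1 ∨ c = -1 ∨ c = Complex.I ∨ c = -Complex.I) ∧ α₁ = c * α₂ ∧ β₁ = c * β₂

/-- `phiAux n = φ_{n-2}`: the Fibonacci sequence shifted so as to start at index `-2`. -/
def phiAux : ℕ → ℤ
  | 0 => -1
  | 1 => 1
  | n + 2 => phiAux (n + 1) + phiAux n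

/-- `φ_k` for integer `k ≥ -2`: `φ_{-2} = -1`, `φ_{-1} = 1`, `φ_{k+1} = φ_k + φ_{k-1}`. -/
def phi (k : ℤ) : ℤ := phiAux (k + 2).toNat

/-- `psiAux n = ψ_{n-2}`: the Lucas sequence shifted so as to start at index `-2`. -/
def psiAux : ℕ → ℤ
  | 0 => 3
  | 1 => -1
  | n + 2 => psiAux (n + 1) + psiAux n

/-- `ψ_k` for integer `k ≥ -2`: `ψ_{-2} = 3`, `ψ_{-1} = -1`, `ψ_{k+1} = ψ_k + ψ_{k-1}`. -/
def psi (k : ℤ) : ℤ := psiAux (k + 2).toNat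

/-- `piAux n = π_{n-1}`. -/
def piAux : ℕ → ℤ
  | 0 => 1
  | 1 => 0
  | n + 2 => 2 * piAux (n + 1) + piAux n

/-- `π_k` for integer `k ≥ -1`: `π_{-1} = 1`, `π_0 = 0`, `π_{k+1} = 2π_k + π_{k-1}`. -/
def piSeq (k : ℤ) : ℤ := piAux (k + 1).toNat

/-- `rhoAux n = ρ_{n-1}`. -/
def rhoAux : ℕ → ℤ
  | 0 => -1
  | 1 => 1
  | n + 2 => 2 * rhoAux (n + 1) + rhoAux n

/-- `ρ_k` for integer `k ≥ -1`: `ρ_{-1} = -1`, `ρ_0 = 1`, `ρ_{k+1} = 2ρ_k + ρ_{k-1}`. -/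
def rhoSeq (k : ℤ) : ℤ := rhoAux (k + 1).toNat

/-- `zetaAux i n = ζ^{(i)}_{n-1}`. -/
def zetaAux (i : ℕ) : ℕ → ℤ
  | 0 => if i = 0 then -1 else if i = 1 then 2 else if i = 2 then 1 else -1
  | 1 => if i = 0 then 0 else 1
  | n + 2 => 4 * zetaAux i (n + 1) - zetaAux i n

/-- `ζ^{(i)}_k` for integer `k ≥ -1`, satisfying `ζ^{(i)}_{k+1} = 4ζ^{(i)}_k - ζ^{(i)}_{k-1}`
with initial values `(ζ^{(i)}_{-1}, ζ^{(i)}_0)` equal to `(-1, 0)`, `(2, 1)`, `(1, 1)`,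
`(-1, 1)` for `i = 0, 1, 2, 3` respectively. -/
def zeta (i : ℕ) (k : ℤ) : ℤ := zetaAux i (k + 1).toNat

theorem csqrt_sq_eq (a : ℤ) : csqrt a ^ 2 = (a : ℂ) := by
  unfold csqrt
  rw [← Complex.cpow_nat_mul]
  norm_num

theorem three_defective_first_family_inequiv (q₁ q₂ : ℤ)
    (h₁ : q₁ ≠ -1 ∧ q₁ ≠ 0 ∧ q₁ ≠ 1) (h₂ : q₂ ≠ -1 ∧ q₂ ≠ 0 ∧ q₂ ≠ 1)
    (hne : q₁ ≠ q₂) :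
    ¬ LehmerEquiv (assocFst (1 + q₁) (1 - 3 * q₁)) (assocSnd (1 + q₁) (1 - 3 * q₁))
      (assocFst (1 + q₂) (1 - 3 * q₂)) (assocSnd (1 + q₂) (1 - 3 * q₂)) := by
  rintro ⟨c, hc, hα, hβ⟩
  have hs : ∀ a : ℤ, csqrt a ^ 2 = (a : ℂ) := fun a => csqrt_sq_eq a
  unfold assocFst at hα
  unfold assocSnd at hβ
  have e1 : csqrt (1 + q₁) = c * csqrt (1 + q₂) := by linear_combination hα + hβ
  have e2 : csqrt (1 - 3 * q₁) = c * csqrt (1 - 3 * q₂) := by linear_combination hβ - hα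
  have f1 : ((1 + q₁ : ℤ) : ℂ) = c ^ 2 * ((1 + q₂ : ℤ) : ℂ) := by
    rw [← hs, ← hs, e1]; ring
  have f2 : ((1 - 3 * q₁ : ℤ) : ℂ) = c ^ 2 * ((1 - 3 * q₂ : ℤ) : ℂ) := by
    rw [← hs, ← hs, e2]; ring
  have hc2 : c ^ 2 = 1 ∨ c ^ 2 = -1 := by
    rcases hc with rfl | rfl | rfl | rfl <;> simp
  rcases hc2 with h | h
  · rw [h, one_mul] at f1
    have g1 : 1 + q₁ = 1 + q₂ := by exact_mod_cast f1
    omega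
  · rw [h] at f1 f2
    have g1 : 1 + q₁ = -1 * (1 + q₂) := by exact_mod_cast f1
    have g2 : 1 - 3 * q₁ = -1 * (1 - 3 * q₂) := by exact_mod_cast f2
    omega
end

section
/- For every integer k ≥ 1, one has ζ^{(3)}_{k−1} < ζ^{(1)}_k < ζ^{(2)}_k < ζ^{(0)}_{k+1} < ζ^{(3)}_k. -/
open Complex

/-- All sequences expressed through `ζ^{(0)}`, with the growth bound that drives the proof. -/
theorem zetaAux_rel (n : ℕ) :
    zetaAux 1 n = zetaAux 0 (n + 1) - 2 * zetaAux 0 n ∧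
    zetaAux 2 n = zetaAux 0 (n + 1) - zetaAux 0 n ∧
    zetaAux 3 n = zetaAux 0 (n + 1) + zetaAux 0 n := by
  induction n using Nat.twoStepInduction with
  | zero => simp [zetaAux]
  | one => simp [zetaAux]
  | more n h1 h2 =>
    have e (i m : ℕ) : zetaAux i (m + 2) = 4 * zetaAux i (m + 1) - zetaAux i m := rfl
    have := e 0 n
    have := e 1 n
    have := e 2 n
    have := e 3 n
    have := e 0 (n + 1)
    simp only [add_assoc, Nat.reduceAdd] at *
    omega

theorem zetaAux_growth (n : ℕ) :
    0 < zetaAux 0 (n + 2) ∧ 7 * zetaAux 0 (n + 2) < 2 * zetaAux 0 (n + 3) := by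
  induction n with
  | zero => simp [zetaAux]
  | succ n ih =>
    have e : zetaAux 0 (n + 4) = 4 * zetaAux 0 (n + 3) - zetaAux 0 (n + 2) := rfl
    simp only [add_assoc, Nat.reduceAdd] at *
    omega

theorem zeta_interlacing (k : ℤ) (hk : 1 ≤ k) :
    zeta 3 (k - 1) < zeta 1 k ∧ zeta 1 k < zeta 2 k ∧
      zeta 2 k < zeta 0 (k + 1) ∧ zeta 0 (k + 1) < zeta 3 k := by
  obtain ⟨n, rfl⟩ : ∃ n : ℕ, k = n + 1 := ⟨(k - 1).toNat, by omega⟩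
  have t1 : ((n : ℤ) + 1 - 1 + 1).toNat = n + 1 := by omega
  have t2 : ((n : ℤ) + 1 + 1).toNat = n + 2 := by omega
  have t3 : ((n : ℤ) + 1 + 1 + 1).toNat = n + 3 := by omega
  simp only [zeta, t1, t2, t3]
  have a := zetaAux_rel (n + 1)
  have b := zetaAux_rel (n + 2)
  have c := zetaAux_growth n
  have e : zetaAux 0 (n + 3) = 4 * zetaAux 0 (n + 2) - zetaAux 0 (n + 1) := rfl
  simp only [add_assoc, Nat.reduceAdd] at *
  omega
end

section
/- If i₁, i₂ ∈ {0,1,2,3} with i₁ ≠ i₂, and k₁, k₂ ≥ 0 are integers with ζ^{(i₁)}_{k₁} = ζ^{(i₂)}_{k₂}, then ζ^{(i₁)}_{k₁} = 1; that is, among the terms with non-negative index, the only value occurring in more than one of the four sequences ζ^{(0)}, ζ^{(1)}, ζ^{(2)}, ζ^{(3)} is 1, which occurs as ζ^{(0)}_1, ζ^{(1)}_0, ζ^{(2)}_0 and ζ^{(3)}_0. -/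
open Complex

theorem zA_lin (n : ℕ) :
    zetaAux 1 (n+1) = zetaAux 0 (n+2) - 2 * zetaAux 0 (n+1) ∧
    zetaAux 2 (n+1) = zetaAux 0 (n+2) - zetaAux 0 (n+1) ∧
    zetaAux 3 (n+1) = zetaAux 0 (n+2) + zetaAux 0 (n+1) ∧
    zetaAux 1 (n+2) = 2 * zetaAux 0 (n+2) - zetaAux 0 (n+1) ∧
    zetaAux 2 (n+2) = 3 * zetaAux 0 (n+2) - zetaAux 0 (n+1) ∧
    zetaAux 3 (n+2) = 5 * zetaAux 0 (n+2) - zetaAux 0 (n+1) := by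
  induction n with
  | zero => simp [zetaAux]
  | succ n ih =>
    have e : ∀ i m, zetaAux i (m+2) = 4 * zetaAux i (m+1) - zetaAux i m := fun i m => rfl
    have e0 := e 0 (n+1)
    have e1 := e 1 (n+1)
    have e2 := e 2 (n+1)
    have e3 := e 3 (n+1)
    simp only [Nat.add_assoc, Nat.reduceAdd] at *
    omega

theorem zA_pos (n : ℕ) :
    0 ≤ zetaAux 0 (n+1) ∧ 2 * zetaAux 0 (n+1) < zetaAux 0 (n+2) := by
  induction n with
  | zero => simp [zetaAux]
  | succ n ih =>
    have e0 : zetaAux 0 (n+3) = 4 * zetaAux 0 (n+2) - zetaAux 0 (n+1) := rfl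
    simp only [Nat.add_assoc, Nat.reduceAdd] at *
    omega

/-- Value `w i k` : the `k`-th block, aligned with `ζ^{(1)}_k ≤ w i k < ζ^{(1)}_{k+1}`. -/
def zW (i k : ℕ) : ℤ := if i = 0 then zetaAux 0 (k+2) else zetaAux i (k+1)

theorem zW_bd (i k : ℕ) (hi : i ≤ 3) :
    zetaAux 1 (k+1) ≤ zW i k ∧ zW i k < zetaAux 1 (k+2) := by
  have h := zA_lin k
  have p := zA_pos k
  interval_cases i <;> simp [zW] <;> omega

theorem zW_inj (i j k m : ℕ) (hi : i ≤ 3) (hj : j ≤ 3) (hij : i ≠ j)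
    (h : zW i k = zW j m) : zW i k = 1 := by
  have mono : Monotone (fun n => zetaAux 1 (n+1)) := by
    apply monotone_nat_of_le_succ
    intro n
    have := zW_bd 1 n (by norm_num)
    exact this.1.trans this.2.le
  have b1 := zW_bd i k hi
  have b2 := zW_bd j m hj
  have hkm : k = m := by
    rcases lt_trichotomy k m with c | c | c
    · have : zetaAux 1 (k+2) ≤ zetaAux 1 (m+1) := mono (show k+1 ≤ m from c)
      omega
    · exact c
    · have : zetaAux 1 (m+2) ≤ zetaAux 1 (k+1) := mono (show m+1 ≤ k from c)
      omega
  subst hkm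
  rcases k with _ | k
  · interval_cases i <;> simp [zW, zetaAux]
  · have l := zA_lin (k+1)
    have p := zA_pos (k+1)
    have q := zA_pos k
    simp only [Nat.add_assoc, Nat.reduceAdd] at *
    interval_cases i <;> interval_cases j <;> simp [zW, Nat.add_assoc] at * <;> omega

theorem zeta_cases (i : ℕ) (hi : i ≤ 3) (k : ℤ) (hk : 0 ≤ k) :
    (i = 0 ∧ zeta i k = 0) ∨ ∃ m, zeta i k = zW i m := by
  lift k to ℕ using hk
  have e : zeta i (k : ℤ) = zetaAux i (k+1) := rfl
  rw [e]
  by_cases h : i = 0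
  · subst h
    rcases k with _ | k
    · left; simp [zetaAux]
    · right; exact ⟨k, by simp [zW]⟩
  · right; exact ⟨k, by simp [zW, h]⟩

theorem zW_pos (i k : ℕ) (hi : i ≤ 3) : 0 < zW i k := by
  have b := zW_bd i k hi
  have l := zA_lin k
  have p := zA_pos k
  omega

theorem zeta_common_value_eq_one :
    (∀ i₁ i₂ : ℕ, i₁ ≤ 3 → i₂ ≤ 3 → i₁ ≠ i₂ → ∀ k₁ k₂ : ℤ, 0 ≤ k₁ → 0 ≤ k₂ →
      zeta i₁ k₁ = zeta i₂ k₂ → zeta i₁ k₁ = 1) ∧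
    zeta 0 1 = 1 ∧ zeta 1 0 = 1 ∧ zeta 2 0 = 1 ∧ zeta 3 0 = 1 := by
  refine ⟨?_, by decide, by decide, by decide, by decide⟩
  intro i j hi hj hij k m hk hm h
  rcases zeta_cases i hi k hk with ⟨a, a'⟩ | ⟨k', a⟩ <;>
    rcases zeta_cases j hj m hm with ⟨b, b'⟩ | ⟨m', b⟩
  · omega
  · have := zW_pos j m' hj
    omega
  · have := zW_pos i k' hi
    omega
  · rw [a]
    exact zW_inj i j k' m' hi hj hij (by rw [← a, ← b, h])
end

section
/- Let a, b be integers such that the pair associated with (a,b) is a Lehmer pair. Then the pair associated with (b,a) is also a Lehmer pair, and the Lehmer pair associated with (a,b) is 10-defective if and only if the Lehmer pair associated with (b,a) is 5-defective. -/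
open Complex

lemma lehmer_swap {x y : ℂ} (h : IsLehmerPair x y) : IsLehmerPair (-x) y := by
  obtain ⟨hx, hy, ⟨p, q, hp, hq, hp0, hq0, hc⟩, hr⟩ := h
  have hy0 : y ≠ 0 := by
    rintro rfl
    apply hq0
    have : (q : ℂ) = 0 := by rw [← hq]; ring
    exact_mod_cast this
  refine ⟨hx.neg, hy, ⟨p - 4 * q, -q, ?_, ?_, ?_, by simpa using hq0, ?_⟩, ?_⟩
  · push_cast
    rw [← hp, ← hq]; ring
  · push_cast
    rw [← hq]; ring
  · intro h0
    have h1 : ((p - 4 * q : ℤ) : ℂ) = 0 := by rw [h0]; simp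
    push_cast at h1
    rw [← hp, ← hq] at h1
    have h2 : (x - y) ^ 2 = 0 := by rw [← h1]; ring
    have h3 : x = y := sub_eq_zero.mp (pow_eq_zero_iff (two_ne_zero) |>.mp h2)
    apply hr
    refine ⟨1, one_pos, ?_⟩
    rw [h3, div_self hy0, one_pow]
  · obtain ⟨u, v, huv⟩ := hc
    exact ⟨u, -v - 4 * u, by linear_combination huv⟩
  · rintro ⟨n, hn, h1⟩
    apply hr
    refine ⟨2 * n, by omega, ?_⟩
    rw [pow_mul]
    have : (x / y) ^ 2 = (-x / y) ^ 2 := by ring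
    rw [this, ← pow_mul, mul_comm, pow_mul, h1, one_pow]

lemma intDvd_cast (l : ℕ) (m : ℤ) : IntDvd l (m : ℂ) ↔ (l : ℤ) ∣ m := by
  constructor
  · rintro ⟨k, hk, hd⟩
    have : k = m := by exact_mod_cast hk
    rwa [← this]
  · intro hd
    exact ⟨m, rfl, hd⟩

section Values

variable {x y : ℂ} {p q : ℤ}

lemma lu_odd (n : ℕ) (hn : Odd n) (h1 : x - y ≠ 0) (z : ℂ) (hz : x ^ n - y ^ n = z * (x - y)) :
    lehmerU x y n = z := by
  rw [lehmerU, if_pos hn, div_eq_iff h1, hz]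

lemma lu_even (n : ℕ) (hn : ¬ Odd n) (h1 : x ^ 2 - y ^ 2 ≠ 0) (z : ℂ)
    (hz : x ^ n - y ^ n = z * (x ^ 2 - y ^ 2)) :
    lehmerU x y n = z := by
  rw [lehmerU, if_neg hn, div_eq_iff h1, hz]

lemma prim_five (hp : (x + y) ^ 2 = (p : ℂ)) (hq : x * y = (q : ℂ))
    (h1 : x - y ≠ 0) (h2 : x ^ 2 - y ^ 2 ≠ 0) (l : ℕ) :
    IsPrimitiveDivisor l 5 x y ↔ l.Prime ∧ (l : ℤ) ∣ p ^ 2 - 3 * p * q + q ^ 2 ∧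
      ¬ (l : ℤ) ∣ p * (p - 4 * q) * ((p - q) * (p - 2 * q)) := by
  have e5 : lehmerU x y 5 = ((p ^ 2 - 3 * p * q + q ^ 2 : ℤ) : ℂ) := by
    apply lu_odd 5 (by decide) h1
    push_cast; rw [← hp, ← hq]; ring
  have e : (x ^ 2 - y ^ 2) ^ 2 * ∏ i ∈ Finset.Ico 1 5, lehmerU x y i
      = ((p * (p - 4 * q) * ((p - q) * (p - 2 * q)) : ℤ) : ℂ) := by
    have e1 : lehmerU x y 1 = 1 := lu_odd 1 (by decide) h1 _ (by ring)
    have e2 : lehmerU x y 2 = 1 := lu_even 2 (by decide) h2 _ (by ring)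
    have e3 : lehmerU x y 3 = x ^ 2 + x * y + y ^ 2 := lu_odd 3 (by decide) h1 _ (by ring)
    have e4 : lehmerU x y 4 = x ^ 2 + y ^ 2 := lu_even 4 (by decide) h2 _ (by ring)
    simp only [Finset.prod_Ico_succ_top, Nat.reduceLeDiff, Finset.Ico_self, Finset.prod_empty,
      le_refl, e1, e2, e3, e4]
    push_cast; rw [← hp, ← hq]; ring
  rw [IsPrimitiveDivisor, e5, e, intDvd_cast, intDvd_cast]

lemma prim_ten (hp : (x + y) ^ 2 = (p : ℂ)) (hq : x * y = (q : ℂ))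
    (h1 : x - y ≠ 0) (h2 : x ^ 2 - y ^ 2 ≠ 0) (l : ℕ) :
    IsPrimitiveDivisor l 10 x y ↔ l.Prime ∧
      (l : ℤ) ∣ (p ^ 2 - 3 * p * q + q ^ 2) * (p ^ 2 - 5 * p * q + 5 * q ^ 2) ∧
      ¬ (l : ℤ) ∣ p * (p - 4 * q) * ((p - q) * (p - 2 * q) * (p ^ 2 - 3 * p * q + q ^ 2) *
        ((p - q) * (p - 3 * q)) * (p ^ 3 - 5 * p ^ 2 * q + 6 * p * q ^ 2 - q ^ 3) *
        ((p - 2 * q) * (p ^ 2 - 4 * p * q + 2 * q ^ 2)) *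
        ((p - q) * (p ^ 3 - 6 * p ^ 2 * q + 9 * p * q ^ 2 - q ^ 3))) := by
  have e10 : lehmerU x y 10 =
      (((p ^ 2 - 3 * p * q + q ^ 2) * (p ^ 2 - 5 * p * q + 5 * q ^ 2) : ℤ) : ℂ) := by
    apply lu_even 10 (by decide) h2
    push_cast; rw [← hp, ← hq]; ring
  have e : (x ^ 2 - y ^ 2) ^ 2 * ∏ i ∈ Finset.Ico 1 10, lehmerU x y i
      = ((p * (p - 4 * q) * ((p - q) * (p - 2 * q) * (p ^ 2 - 3 * p * q + q ^ 2) *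
        ((p - q) * (p - 3 * q)) * (p ^ 3 - 5 * p ^ 2 * q + 6 * p * q ^ 2 - q ^ 3) *
        ((p - 2 * q) * (p ^ 2 - 4 * p * q + 2 * q ^ 2)) *
        ((p - q) * (p ^ 3 - 6 * p ^ 2 * q + 9 * p * q ^ 2 - q ^ 3))) : ℤ) : ℂ) := by
    have e0 : (x ^ 2 - y ^ 2) ^ 2 = (p : ℂ) * (p - 4 * q) := by
      rw [← hp, ← hq]; ring
    have e1 : lehmerU x y 1 = 1 := lu_odd 1 (by decide) h1 _ (by ring)
    have e2 : lehmerU x y 2 = 1 := lu_even 2 (by decide) h2 _ (by ring)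
    have e3 : lehmerU x y 3 = p - q :=
      lu_odd 3 (by decide) h1 _ (by rw [← hp, ← hq]; ring)
    have e4 : lehmerU x y 4 = p - 2 * q :=
      lu_even 4 (by decide) h2 _ (by rw [← hp, ← hq]; ring)
    have e5 : lehmerU x y 5 = p ^ 2 - 3 * p * q + q ^ 2 :=
      lu_odd 5 (by decide) h1 _ (by rw [← hp, ← hq]; ring)
    have e6 : lehmerU x y 6 = (p - q) * (p - 3 * q) :=
      lu_even 6 (by decide) h2 _ (by rw [← hp, ← hq]; ring)
    have e7 : lehmerU x y 7 = p ^ 3 - 5 * p ^ 2 * q + 6 * p * q ^ 2 - q ^ 3 :=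
      lu_odd 7 (by decide) h1 _ (by rw [← hp, ← hq]; ring)
    have e8 : lehmerU x y 8 = (p - 2 * q) * (p ^ 2 - 4 * p * q + 2 * q ^ 2) :=
      lu_even 8 (by decide) h2 _ (by rw [← hp, ← hq]; ring)
    have e9 : lehmerU x y 9 = (p - q) * (p ^ 3 - 6 * p ^ 2 * q + 9 * p * q ^ 2 - q ^ 3) :=
      lu_odd 9 (by decide) h1 _ (by rw [← hp, ← hq]; ring)
    simp only [Finset.prod_Ico_succ_top, Nat.reduceLeDiff, Finset.Ico_self, Finset.prod_empty,
      le_refl, e0, e1, e2, e3, e4, e5, e6, e7, e8, e9]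
    push_cast; ring
  rw [IsPrimitiveDivisor, e10, e, intDvd_cast, intDvd_cast]

end Values

lemma arith_core {p q : ℤ} (hc : IsCoprime p q) {l : ℤ} (hl : Prime l) :
    ((l ∣ (p ^ 2 - 3 * p * q + q ^ 2) * (p ^ 2 - 5 * p * q + 5 * q ^ 2) ∧
      ¬ l ∣ p * (p - 4 * q) * ((p - q) * (p - 2 * q) * (p ^ 2 - 3 * p * q + q ^ 2) *
        ((p - q) * (p - 3 * q)) * (p ^ 3 - 5 * p ^ 2 * q + 6 * p * q ^ 2 - q ^ 3) *
        ((p - 2 * q) * (p ^ 2 - 4 * p * q + 2 * q ^ 2)) *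
        ((p - q) * (p ^ 3 - 6 * p ^ 2 * q + 9 * p * q ^ 2 - q ^ 3)))) ↔
     (l ∣ (p - 4 * q) ^ 2 - 3 * (p - 4 * q) * (-q) + (-q) ^ 2 ∧
      ¬ l ∣ (p - 4 * q) * ((p - 4 * q) - 4 * (-q)) *
        (((p - 4 * q) - (-q)) * ((p - 4 * q) - 2 * (-q))))) := by
  have r1 : (p - 4 * q) ^ 2 - 3 * (p - 4 * q) * (-q) + (-q) ^ 2
    = p ^ 2 - 5 * p * q + 5 * q ^ 2 := by ring
  have r2 : (p - 4 * q) - 4 * (-q) = p := by ring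
  have r3 : (p - 4 * q) - (-q) = p - 3 * q := by ring
  have r4 : (p - 4 * q) - 2 * (-q) = p - 2 * q := by ring
  rw [r1, r2, r3, r4]
  simp only [hl.dvd_mul, not_or]
  constructor
  · rintro ⟨h, h'⟩
    tauto
  · rintro ⟨h, ⟨hb, hp⟩, h3, h4⟩
    have hq : ¬ l ∣ q := by
      intro hq
      apply hp
      apply hl.dvd_of_dvd_pow (n := 2)
      have : p ^ 2 = (p ^ 2 - 5 * p * q + 5 * q ^ 2) + q * (5 * p - 5 * q) := by ring
      rw [this]
      exact dvd_add h (hq.mul_right _)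
    have hq2 : ¬ l ∣ q ^ 2 := fun hh => hq (hl.dvd_of_dvd_pow hh)
    have n1 : ¬ l ∣ p - q := by
      intro hh
      apply hq2
      have : q ^ 2 = (p ^ 2 - 5 * p * q + 5 * q ^ 2) - (p - q) * (p - 4 * q) := by ring
      rw [this]
      exact dvd_sub h (hh.mul_right _)
    have n5 : ¬ l ∣ p ^ 2 - 3 * p * q + q ^ 2 := by
      intro hh
      have e : l ∣ 2 * (q * (p - 2 * q)) := by
        obtain ⟨u, hu⟩ := hh
        obtain ⟨v, hv⟩ := h
        exact ⟨u - v, by linear_combination hu - hv⟩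
      simp only [hl.dvd_mul] at e
      rcases e with e | e | e
      · have e2 : (2 : ℤ) ∣ l := by
          have := (hl.associated_of_dvd Int.prime_two e)
          exact this.symm.dvd
        have h2 := e2.trans hh
        have hp2 : ¬ (2 : ℤ) ∣ p := fun hh => hp (e.trans hh)
        have hq2 : ¬ (2 : ℤ) ∣ q := fun hh => hq (e.trans hh)
        rw [← even_iff_two_dvd] at h2 hp2 hq2
        have h33 : ¬ Even (3 : ℤ) := by decide
        simp only [Int.even_add, Int.even_sub, Int.even_mul, Int.even_pow] at h2
        tauto
      · exact hq e
      · exact h4 e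
    have n7 : ¬ l ∣ p ^ 3 - 5 * p ^ 2 * q + 6 * p * q ^ 2 - q ^ 3 := by
      intro hh
      have e : l ∣ q ^ 2 * (p - q) := by
        obtain ⟨u, hu⟩ := hh
        obtain ⟨v, hv⟩ := h
        exact ⟨u - p * v, by linear_combination hu - p * hv⟩
      rcases hl.dvd_or_dvd e with e | e
      · exact hq2 e
      · exact n1 e
    have n8 : ¬ l ∣ p ^ 2 - 4 * p * q + 2 * q ^ 2 := by
      intro hh
      have e : l ∣ q * (p - 3 * q) := by
        obtain ⟨u, hu⟩ := hh
        obtain ⟨v, hv⟩ := h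
        exact ⟨u - v, by linear_combination hu - hv⟩
      rcases hl.dvd_or_dvd e with e | e
      · exact hq e
      · exact h3 e
    have n9 : ¬ l ∣ p ^ 3 - 6 * p ^ 2 * q + 9 * p * q ^ 2 - q ^ 3 := by
      intro hh
      have e : l ∣ q ^ 2 * (p - 4 * q) := by
        obtain ⟨u, hu⟩ := hh
        obtain ⟨v, hv⟩ := h
        exact ⟨(p - q) * v - u, by linear_combination (p - q) * hv - hu⟩
      rcases hl.dvd_or_dvd e with e | e
      · exact hq2 e
      · exact hb e
    tauto

lemma prim_iff {x y : ℂ} (h : IsLehmerPair x y) (l : ℕ) :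
    IsPrimitiveDivisor l 10 x y ↔ IsPrimitiveDivisor l 5 (-x) y := by
  obtain ⟨-, -, ⟨p', q', hp', hq', hp0', hq0', -⟩, -⟩ := lehmer_swap h
  obtain ⟨hx, hy, ⟨p, q, hp, hq, hp0, hq0, hc⟩, hr⟩ := h
  have a1 : x + y ≠ 0 := by
    intro h0
    rw [h0] at hp
    apply hp0
    have : (p : ℂ) = 0 := by rw [← hp]; ring
    exact_mod_cast this
  have a2 : x - y ≠ 0 := by
    intro h0
    apply hp0'
    have : (p' : ℂ) = 0 := by rw [← hp', show -x + y = -(x - y) by ring, h0]; ring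
    exact_mod_cast this
  have a3 : x ^ 2 - y ^ 2 ≠ 0 := by
    rw [show x ^ 2 - y ^ 2 = (x + y) * (x - y) by ring]
    exact mul_ne_zero a1 a2
  have a4 : -x - y ≠ 0 := by
    rw [show -x - y = -(x + y) by ring]
    exact neg_ne_zero.mpr a1
  rw [prim_ten hp hq a2 a3, prim_five (p := p - 4 * q) (q := -q) _ _ a4 (by simpa using a3)]
  · refine and_congr_right fun hl => ?_
    exact arith_core hc (Nat.prime_iff_prime_int.mp hl)
  · push_cast; rw [← hp, ← hq]; ring
  · push_cast; rw [← hq]; ring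

theorem ten_defective_iff_swap_five_defective (a b : ℤ)
    (h : IsLehmerPair (assocFst a b) (assocSnd a b)) :
    IsLehmerPair (assocFst b a) (assocSnd b a) ∧
      (IsDefective 10 (assocFst a b) (assocSnd a b) ↔
        IsDefective 5 (assocFst b a) (assocSnd b a)) := by
  have e1 : assocFst b a = -assocFst a b := by
    unfold assocFst; ring
  have e2 : assocSnd b a = assocSnd a b := by
    unfold assocSnd; ring
  rw [e1, e2]
  have hs := lehmer_swap h
  refine ⟨hs, ?_⟩
  simp only [IsDefective, h, hs, true_and, prim_iff h]
end
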